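/- Let f : ℝ² → ℝ be of class C² satisfying (i) D²f(p)(q,q) > 0 for all p, q ∈ ℝ² with q ≠ 0, and (ii) there is a constant Λ > 0 with |D²f(p)| ≤ Λ/(1+|p|) for all p ∈ ℝ². Let u ∈ C²(ℝ²) be an entire solution of div[Df(∇u)] = 0 on ℝ². If there is a constant K > 0 such that |∂₁u(x)| · ln²(1+|∂₁u(x)|) ≤ K(|∂₂u(x)| + 1) for all x ∈ ℝ², then u is an affine function, i.e. there exist a, b, c ∈ ℝ with u(x₁,x₂) = a x₁ + b x₂ + c. -/

import Mathlib

open Real MeasureTheory Metric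
open scoped ENNReal

noncomputable section

/-- `ℝ²` with its Euclidean structure. -/
abbrev E2 : Type := EuclideanSpace ℝ (Fin 2)

/-- The `i`-th standard basis vector of `ℝ²`. -/
def ee (i : Fin 2) : E2 := EuclideanSpace.single i 1

/-- The Hessian bilinear form `D²f(p)(q,q)`. -/
def Hess (f : E2 → ℝ) (p q : E2) : ℝ := iteratedFDeriv ℝ 2 f p ![q, q]

/-- The partial derivative `∂ᵢu(x)`. -/
def pd (u : E2 → ℝ) (i : Fin 2) (x : E2) : ℝ := fderiv ℝ u x (ee i)

/-- The equation `div [Df(∇u)] = 0`, i.e. `∑ i, ∂ᵢ[(∂f/∂pᵢ)(∇u(x))] = 0` on `ℝ²`. -/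
def solves (f u : E2 → ℝ) : Prop :=
  ∀ x : E2, ∑ i : Fin 2, fderiv ℝ (fun y => fderiv ℝ f (gradient u y) (ee i)) x (ee i) = 0

/-!
Differentiating the equation, `w = ∂₁u` solves `div (D²f(∇u) ∇w) = 0`. Since `u` is only `C²`, this
holds in the weak sense, by exchanging `∂₁` with the `∂ᵢ` of the divergence under the integral.

The growth conditions say that `D²f(∇u) ≤ C Φ'(w)` for the function `Φ = arctan ∘ arsinh`, which is
increasing and, decisively, bounded. Testing the equation with `η² Φ(w)` therefore yields the
Caccioppoli inequality `∫ η² Φ'(w) D²f(∇u)(∇w, ∇w) ≤ C' ∫ |∇η|²`, with no weight on the right. The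
plane is parabolic: averaging `N` dyadic bump functions, whose gradients live on disjoint annuli and
have the same Dirichlet energy, gives cutoffs `η` with energy of order `1 / N`. Hence `∇w = 0`.

What then remains of the equation, together with the positivity of `D²f`, forces `∂₂₂u = 0`.
-/

section MixedDerivatives

open scoped Convolution Topology

variable {E : Type*} [NormedAddCommGroup E] [NormedSpace ℝ E] [FiniteDimensional ℝ E]
  [MeasurableSpace E] [BorelSpace E] {μ : Measure E} [μ.IsAddHaarMeasure] {f g : E → ℝ}

theorem fderiv_convolution_right_apply (hf : LocallyIntegrable f μ) (hg : ContDiff ℝ 1 g)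
    (hgc : HasCompactSupport g) (x a : E) :
    fderiv ℝ (f ⋆[ContinuousLinearMap.mul ℝ ℝ, μ] g) x a =
      (f ⋆[ContinuousLinearMap.mul ℝ ℝ, μ] fun t => fderiv ℝ g t a) x := by
  rw [(hgc.hasFDerivAt_convolution_right _ hf hg x).fderiv,
    convolution_precompR_apply _ hf (hgc.fderiv ℝ) (hg.continuous_fderiv one_ne_zero)]

theorem fderiv_convolution_left_apply (hf : ContDiff ℝ 1 f) (hfc : HasCompactSupport f)
    (hg : LocallyIntegrable g μ) (x a : E) :
    fderiv ℝ (f ⋆[ContinuousLinearMap.mul ℝ ℝ, μ] g) x a =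
      ((fun t => fderiv ℝ f t a) ⋆[ContinuousLinearMap.mul ℝ ℝ, μ] g) x := by
  have hcomm (h k : E → ℝ) : h ⋆[ContinuousLinearMap.mul ℝ ℝ, μ] k =
      k ⋆[ContinuousLinearMap.mul ℝ ℝ, μ] h := by
    rw [← convolution_flip, ContinuousLinearMap.flip_mul]
  rw [hcomm, fderiv_convolution_right_apply hg hf hfc, hcomm]

theorem convolution_fderiv_apply_comm (hf : ContDiff ℝ 1 f) (hfc : HasCompactSupport f)
    (hg : ContDiff ℝ 1 g) (hgc : HasCompactSupport g) (x a b : E) :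
    ((fun t => fderiv ℝ f t a) ⋆[ContinuousLinearMap.mul ℝ ℝ, μ] fun t => fderiv ℝ g t b) x =
      ((fun t => fderiv ℝ f t b) ⋆[ContinuousLinearMap.mul ℝ ℝ, μ] fun t => fderiv ℝ g t a) x := by
  have locallyIntegrable_deriv {h : E → ℝ} (hh : ContDiff ℝ 1 h) (c : E) :
      LocallyIntegrable (fun t => fderiv ℝ h t c) μ :=
    ((hh.continuous_fderiv one_ne_zero).clm_apply continuous_const).locallyIntegrable
  have hswap : ((fun t => fderiv ℝ f t a) ⋆[ContinuousLinearMap.mul ℝ ℝ, μ] g) =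
      f ⋆[ContinuousLinearMap.mul ℝ ℝ, μ] fun t => fderiv ℝ g t a := by
    ext y
    rw [← fderiv_convolution_left_apply hf hfc hg.continuous.locallyIntegrable,
      fderiv_convolution_right_apply hf.continuous.locallyIntegrable hg hgc]
  rw [← fderiv_convolution_right_apply (locallyIntegrable_deriv hf a) hg hgc, hswap,
    fderiv_convolution_left_apply hf hfc (locallyIntegrable_deriv hg a)]

theorem integral_fderiv_mul_fderiv_comm_of_hasCompactSupport (hf : ContDiff ℝ 1 f)
    (hfc : HasCompactSupport f) (hg : ContDiff ℝ 1 g) (hgc : HasCompactSupport g) (a b : E) :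
    ∫ x, fderiv ℝ f x a * fderiv ℝ g x b ∂μ = ∫ x, fderiv ℝ f x b * fderiv ℝ g x a ∂μ := by
  have hneg (x c : E) : fderiv ℝ (fun y => g (-y)) (-x) c = -fderiv ℝ g x c := by
    simpa using congr($(fderiv_comp_smul (𝕜 := ℝ) (f := g) (x := -x) (-1)) c)
  have h := convolution_fderiv_apply_comm (μ := μ) hf hfc (hg.comp contDiff_neg)
    (hgc.comp_homeomorph (Homeomorph.neg E)) 0 a b
  simpa only [convolution_def, zero_sub, ContinuousLinearMap.mul_apply', Function.comp_def, hneg,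
    mul_neg, integral_neg, neg_inj] using h

theorem integral_fderiv_mul_fderiv_comm (hf : ContDiff ℝ 1 f) (hg : ContDiff ℝ 1 g)
    (hgc : HasCompactSupport g) (a b : E) :
    ∫ x, fderiv ℝ f x a * fderiv ℝ g x b ∂μ = ∫ x, fderiv ℝ f x b * fderiv ℝ g x a ∂μ := by
  obtain ⟨R, hR, hsub⟩ := hgc.isCompact.isBounded.subset_ball_lt 0 0
  let χ : ContDiffBump (0 : E) := ⟨R, R + 1, hR, by linarith⟩
  have hcut (x c d : E) : fderiv ℝ (fun y => χ y * f y) x c * fderiv ℝ g x d =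
      fderiv ℝ f x c * fderiv ℝ g x d := by
    by_cases hx : x ∈ tsupport g
    · have hχf : (fun y => χ y * f y) =ᶠ[𝓝 x] f := by
        filter_upwards [χ.eventuallyEq_one_of_mem_ball (hsub hx)] with y hy
        simp [hy]
      rw [hχf.fderiv_eq]
    · simp [fderiv_of_notMem_tsupport ℝ hx]
  simpa only [hcut] using integral_fderiv_mul_fderiv_comm_of_hasCompactSupport (μ := μ)
    (χ.contDiff.mul hf) χ.hasCompactSupport.mul_right hg hgc a b

end MixedDerivatives

section Gradient

variable {E : Type*} [NormedAddCommGroup E] [InnerProductSpace ℝ E] [CompleteSpace E] {u : E → ℝ}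

theorem norm_gradient (u : E → ℝ) (x : E) : ‖gradient u x‖ = ‖fderiv ℝ u x‖ := by
  rw [gradient, LinearIsometryEquiv.norm_map]

theorem contDiff_gradient {m n : WithTop ℕ∞} (hu : ContDiff ℝ n u) (hmn : m + 1 ≤ n) :
    ContDiff ℝ m (gradient u) :=
  (InnerProductSpace.toDual ℝ E).symm.contDiff.comp (hu.fderiv_right hmn)

theorem continuous_gradient (hu : ContDiff ℝ 1 u) : Continuous (gradient u) :=
  (contDiff_gradient (m := 0) hu (by norm_num)).continuous

theorem hasCompactSupport_gradient (hu : HasCompactSupport u) : HasCompactSupport (gradient u) :=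
  (hu.fderiv ℝ).comp_left (map_zero (InnerProductSpace.toDual ℝ E).symm)

theorem gradient_comp_smul (u : E → ℝ) (c : ℝ) (x : E) :
    gradient (fun y => u (c • y)) x = c • gradient u (c • x) := by
  rw [gradient, fderiv_comp_smul, map_smul, gradient]

theorem gradient_sq_mul_comp {η w : E → ℝ} {Φ : ℝ → ℝ} {x : E} (hη : DifferentiableAt ℝ η x)
    (hw : DifferentiableAt ℝ w x) (hΦ : DifferentiableAt ℝ Φ (w x)) :
    gradient (fun y => η y ^ 2 * Φ (w y)) x =
      (η x ^ 2 * deriv Φ (w x)) • gradient w x + (2 * η x * Φ (w x)) • gradient η x := by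
  have h : HasFDerivAt (fun y => η y ^ 2 * Φ (w y)) _ x :=
    (hη.hasFDerivAt.pow 2).mul (hΦ.hasDerivAt.comp_hasFDerivAt x hw.hasFDerivAt)
  refine ext_inner_right ℝ fun q => ?_
  rw [inner_gradient_left, h.fderiv]
  simp [inner_add_left, inner_smul_left]
  ring

theorem inner_fderiv_gradient (hu : ContDiff ℝ 2 u) (x p q : E) :
    inner ℝ (fderiv ℝ (gradient u) x p) q = fderiv ℝ (fderiv ℝ u) x p q := by
  have hdiff : DifferentiableAt ℝ (fderiv ℝ u) x :=
    (hu.fderiv_right (m := 1) (by norm_num)).differentiable one_ne_zero x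
  have h : fderiv ℝ (gradient u) x = _ :=
    ((InnerProductSpace.toDual ℝ E).symm.toContinuousLinearEquiv.hasFDerivAt.comp x
      hdiff.hasFDerivAt).fderiv
  simp [h]

theorem isSymmetric_fderiv_gradient (hu : ContDiff ℝ 2 u) (x : E) :
    (fderiv ℝ (gradient u) x : E →ₗ[ℝ] E).IsSymmetric := fun p q => by
  rw [ContinuousLinearMap.coe_coe, inner_fderiv_gradient hu,
    hu.contDiffAt.isSymmSndFDerivAt (by simp), ← inner_fderiv_gradient hu, real_inner_comm]

theorem gradient_fderiv_apply (hu : ContDiff ℝ 2 u) (x e : E) :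
    gradient (fun y => fderiv ℝ u y e) x = fderiv ℝ (gradient u) x e := by
  have hdiff : DifferentiableAt ℝ (fderiv ℝ u) x :=
    (hu.fderiv_right (m := 1) (by norm_num)).differentiable one_ne_zero x
  refine ext_inner_right ℝ fun q => ?_
  rw [inner_gradient_left, inner_fderiv_gradient hu, fderiv_clm_apply hdiff (by fun_prop),
    hu.contDiffAt.isSymmSndFDerivAt (by simp)]
  simp

theorem eq_inner_gradient_add_of_fderiv_gradient_eq_zero (hu : ContDiff ℝ 2 u)
    (hzero : ∀ x, fderiv ℝ (gradient u) x = 0) (x : E) :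
    u x = inner ℝ (gradient u 0) x + u 0 := by
  have hconst (y : E) : gradient u y = gradient u 0 :=
    is_const_of_fderiv_eq_zero
      ((contDiff_gradient (m := 1) hu (by norm_num)).differentiable one_ne_zero) hzero y 0
  have haffine (y : E) : HasFDerivAt (fun z => inner ℝ (gradient u 0) z + u 0)
      (innerSL ℝ (gradient u 0)) y :=
    (innerSL ℝ (gradient u 0)).hasFDerivAt.add_const _
  refine congrFun (eq_of_fderiv_eq (𝕜 := ℝ) (hu.differentiable two_ne_zero)
    (fun y => (haffine y).differentiableAt) (fun y => ?_) 0 (by simp)) x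
  ext q
  rw [(haffine y).fderiv, ← inner_gradient_left, hconst, innerSL_apply_apply]

theorem apply_gradient_eq_sum {ι : Type*} [Fintype ι] (b : OrthonormalBasis ι ℝ E)
    (A : StrongDual ℝ E) (φ : E → ℝ) (x : E) :
    A (gradient φ x) = ∑ i, A (b i) * fderiv ℝ φ x (b i) := by
  conv_lhs => rw [← b.sum_repr' (gradient φ x)]
  simp only [map_sum, map_smul, smul_eq_mul, inner_gradient_right, conj_trivial, mul_comm]

end Gradient

section PositiveForm

variable {E : Type*} [NormedAddCommGroup E] [NormedSpace ℝ E]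

theorem neg_two_mul_apply_le_of_nonneg {b : E →L[ℝ] E →L[ℝ] ℝ} (hsymm : ∀ p q, b p q = b q p)
    (hnonneg : ∀ q, 0 ≤ b q q) (p q : E) : -(2 * b p q) ≤ b p p / 2 + 2 * b q q := by
  have h := hnonneg (p + (2 : ℝ) • q)
  simp only [map_add, map_smul, add_apply, smul_apply, smul_eq_mul, hsymm q p] at h
  linarith

end PositiveForm

section EnergyDensity

variable {E : Type*} [NormedAddCommGroup E] [InnerProductSpace ℝ E] [CompleteSpace E]
  {B : E → E →L[ℝ] E →L[ℝ] ℝ} {w η : E → ℝ} {Φ : ℝ → ℝ} {M C : ℝ}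

/-- The density `Φ'(w) B(∇w, ∇w)` of the pairing of `∇w` with `∇(Φ ∘ w)` under the form `B`. The
Liouville theorem amounts to its vanishing. -/
def energyDensity (B : E → E →L[ℝ] E →L[ℝ] ℝ) (Φ : ℝ → ℝ) (w : E → ℝ) (x : E) : ℝ :=
  deriv Φ (w x) * B x (gradient w x) (gradient w x)

theorem continuous_energyDensity (hB : Continuous B) (hΦ : ContDiff ℝ 1 Φ) (hw : ContDiff ℝ 1 w) :
    Continuous (energyDensity B Φ w) := by
  have hgrad := continuous_gradient hw
  exact ((hΦ.continuous_deriv le_rfl).comp hw.continuous).mul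
    ((hB.clm_apply hgrad).clm_apply hgrad)

theorem half_sq_mul_energyDensity_sub_le (hsymm : ∀ x p q, B x p q = B x q p)
    (hnonneg : ∀ x q, 0 ≤ B x q q) (hΦ' : ∀ t, 0 < deriv Φ t) (hΦM : ∀ t, |Φ t| ≤ M)
    (hbd : ∀ x q, B x q q ≤ C * deriv Φ (w x) * ‖q‖ ^ 2) (x : E) :
    η x ^ 2 * energyDensity B Φ w x / 2 - 2 * M ^ 2 * C * ‖gradient η x‖ ^ 2 ≤
      η x ^ 2 * energyDensity B Φ w x +
        2 * η x * Φ (w x) * B x (gradient w x) (gradient η x) := by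
  rw [energyDensity]
  set d := deriv Φ (w x)
  have hd : 0 < d := hΦ' _
  -- Young's inequality with the weight `Φ'(w)`: the resulting factor `1 / Φ'(w)` is exactly what
  -- `hbd` compensates, so no weight is left on the energy of `η`.
  have hcross : -(2 * η x * Φ (w x) * B x (gradient w x) (gradient η x)) ≤
      η x ^ 2 * (d * B x (gradient w x) (gradient w x)) / 2 +
        2 * (Φ (w x) ^ 2 * (B x (gradient η x) (gradient η x) / d)) := by
    have h := mul_le_mul_of_nonneg_left (neg_two_mul_apply_le_of_nonneg (hsymm x) (hnonneg x)
      (η x • gradient w x) ((Φ (w x) / d) • gradient η x)) hd.le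
    simp only [map_smul, smul_apply, smul_eq_mul] at h
    refine (le_of_eq ?_).trans (h.trans (le_of_eq ?_)) <;> field_simp
  have hcutoff : Φ (w x) ^ 2 * (B x (gradient η x) (gradient η x) / d) ≤
      M ^ 2 * (C * ‖gradient η x‖ ^ 2) := by
    refine mul_le_mul (sq_le_sq.2 ((hΦM _).trans (le_abs_self M))) ?_
      (div_nonneg (hnonneg _ _) hd.le) (sq_nonneg M)
    rw [div_le_iff₀ hd]
    linarith [hbd x (gradient η x)]
  linarith

end EnergyDensity

section WeakSolution

variable {E : Type*} [NormedAddCommGroup E] [InnerProductSpace ℝ E] [FiniteDimensional ℝ E]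
  [MeasurableSpace E] [BorelSpace E] {B : E → E →L[ℝ] E →L[ℝ] ℝ} {w η : E → ℝ} {Φ : ℝ → ℝ}
  {M C : ℝ}

theorem integrable_norm_gradient_sq (hη : ContDiff ℝ 1 η) (hηc : HasCompactSupport η) :
    Integrable fun x => ‖gradient η x‖ ^ 2 := by
  have hcont : Continuous fun x => ‖gradient η x‖ ^ 2 := (continuous_gradient hη).norm.pow 2
  have hsupp : HasCompactSupport fun x => ‖gradient η x‖ ^ 2 := by
    simp only [sq]
    exact (hasCompactSupport_gradient hηc).norm.mul_right
  exact hcont.integrable_of_hasCompactSupport hsupp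

theorem integrable_sq_mul_energyDensity (hB : Continuous B) (hΦ : ContDiff ℝ 1 Φ)
    (hw : ContDiff ℝ 1 w) (hη : Continuous η) (hηc : HasCompactSupport η) :
    Integrable fun x => η x ^ 2 * energyDensity B Φ w x := by
  refine Continuous.integrable_of_hasCompactSupport
    ((hη.pow 2).mul (continuous_energyDensity hB hΦ hw)) ?_
  simp only [sq, mul_assoc]
  exact hηc.mul_right

/-- `w` is a weak solution of `div (B ∇w) = 0`. As `w` is meant to be `C¹`, all compactly supported
`C¹` functions are admissible test functions. -/
def IsWeakSolution (B : E → E →L[ℝ] E →L[ℝ] ℝ) (w : E → ℝ) : Prop :=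
  ∀ φ : E → ℝ, ContDiff ℝ 1 φ → HasCompactSupport φ →
    ∫ x, B x (gradient w x) (gradient φ x) = 0

theorem integral_sq_mul_energyDensity_add_eq_zero (hsol : IsWeakSolution B w)
    (hw : ContDiff ℝ 1 w) (hΦ : ContDiff ℝ 1 Φ) (hη : ContDiff ℝ 1 η)
    (hηc : HasCompactSupport η) :
    ∫ x, (η x ^ 2 * energyDensity B Φ w x +
      2 * η x * Φ (w x) * B x (gradient w x) (gradient η x)) = 0 := by
  have htest : HasCompactSupport fun x => η x ^ 2 * Φ (w x) := by
    simp only [sq]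
    exact hηc.mul_right.mul_right
  have hsmooth : ContDiff ℝ 1 fun x => η x ^ 2 * Φ (w x) := (hη.pow 2).mul (hΦ.comp hw)
  rw [← hsol _ hsmooth htest]
  congr 1 with x
  rw [gradient_sq_mul_comp (hη.differentiable one_ne_zero x) (hw.differentiable one_ne_zero x)
    (hΦ.differentiable one_ne_zero _), energyDensity]
  simp only [map_add, map_smul, smul_eq_mul]
  ring

theorem integral_sq_mul_energyDensity_le (hB : Continuous B)
    (hsymm : ∀ x p q, B x p q = B x q p) (hnonneg : ∀ x q, 0 ≤ B x q q)
    (hsol : IsWeakSolution B w) (hw : ContDiff ℝ 1 w) (hΦ : ContDiff ℝ 1 Φ)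
    (hΦ' : ∀ t, 0 < deriv Φ t) (hΦM : ∀ t, |Φ t| ≤ M)
    (hbd : ∀ x q, B x q q ≤ C * deriv Φ (w x) * ‖q‖ ^ 2) (hη : ContDiff ℝ 1 η)
    (hηc : HasCompactSupport η) :
    ∫ x, η x ^ 2 * energyDensity B Φ w x ≤ 4 * M ^ 2 * C * ∫ x, ‖gradient η x‖ ^ 2 := by
  have hintη : Integrable fun x => ‖gradient η x‖ ^ 2 := integrable_norm_gradient_sq hη hηc
  have hintQ : Integrable fun x => η x ^ 2 * energyDensity B Φ w x :=
    integrable_sq_mul_energyDensity hB hΦ hw hη.continuous hηc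
  have hintcross : Integrable fun x =>
      2 * η x * Φ (w x) * B x (gradient w x) (gradient η x) := by
    refine Continuous.integrable_of_hasCompactSupport ?_ ?_
    · exact ((hη.continuous.const_mul 2).mul (hΦ.continuous.comp hw.continuous)).mul
        ((hB.clm_apply (continuous_gradient hw)).clm_apply (continuous_gradient hη))
    · exact HasCompactSupport.mul_right (HasCompactSupport.mul_right hηc.mul_left)
  have hle : ∫ x, (η x ^ 2 * energyDensity B Φ w x / 2 - 2 * M ^ 2 * C * ‖gradient η x‖ ^ 2) ≤
      ∫ x, (η x ^ 2 * energyDensity B Φ w x +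
        2 * η x * Φ (w x) * B x (gradient w x) (gradient η x)) :=
    integral_mono ((hintQ.div_const 2).sub (hintη.const_mul _)) (hintQ.add hintcross)
      (half_sq_mul_energyDensity_sub_le hsymm hnonneg hΦ' hΦM hbd)
  rw [integral_sq_mul_energyDensity_add_eq_zero hsol hw hΦ hη hηc,
    integral_sub (hintQ.div_const 2) (hintη.const_mul _), integral_div,
    integral_const_mul] at hle
  linarith

end WeakSolution

section DyadicCutoff

theorem dist_mem_Ioo_of_fderiv_contDiffBump_ne_zero {E : Type*} [NormedAddCommGroup E]
    [NormedSpace ℝ E] [HasContDiffBump E] {c x : E} (f : ContDiffBump c)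
    (hx : fderiv ℝ f x ≠ 0) : dist x c ∈ Set.Ioo f.rIn f.rOut := by
  by_contra hout
  rw [Set.mem_Ioo, not_and_or, not_lt, not_lt] at hout
  refine hx ?_
  rcases hout with hin | hout
  · refine IsLocalMax.fderiv_eq_zero (.of_forall fun y => ?_)
    rw [f.one_of_mem_closedBall hin]
    exact f.le_one
  · refine IsLocalMin.fderiv_eq_zero (.of_forall fun y => ?_)
    rw [f.zero_of_le_dist hout]
    exact f.nonneg

variable {E : Type*} [NormedAddCommGroup E] [InnerProductSpace ℝ E]

theorem norm_sum_sq_of_pairwise_inner_eq_zero {ι : Type*} {s : Finset ι} {v : ι → E}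
    (hv : (s : Set ι).Pairwise fun i j => inner ℝ (v i) (v j) = 0) :
    ‖∑ i ∈ s, v i‖ ^ 2 = ∑ i ∈ s, ‖v i‖ ^ 2 := by
  simp only [← real_inner_self_eq_norm_sq, sum_inner, inner_sum]
  exact Finset.sum_congr rfl fun i hi =>
    Finset.sum_eq_single_of_mem i hi fun j hj hji => hv hj hi hji

/-- A smooth bump function which is `1` on the ball of radius `R` and `0` outside that of radius
`2R`. The different scales are dilations of one profile, so that in dimension two they all have the
same Dirichlet energy. -/
def dyadicBump (R : ℝ) (x : E) : ℝ :=
  (⟨1, 2, one_pos, one_lt_two⟩ : ContDiffBump (0 : E)) (R⁻¹ • x)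

theorem contDiff_dyadicBump (R : ℝ) : ContDiff ℝ 1 (dyadicBump R : E → ℝ) :=
  (ContDiffBump.contDiff _).comp (contDiff_const_smul _)

variable {R S r : ℝ} {N : ℕ} {x : E}

theorem dyadicBump_eq_one (hR : 0 < R) (hx : ‖x‖ ≤ R) : dyadicBump R x = 1 := by
  refine ContDiffBump.one_of_mem_closedBall _ ?_
  rw [mem_closedBall_zero_iff, norm_smul, norm_inv, norm_of_nonneg hR.le, inv_mul_le_iff₀ hR]
  simpa using hx

/-- The average of `N` dyadic bump functions at the scales `r, 2r, …, 2ᴺ⁻¹r`. -/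
def dyadicCutoff (r : ℝ) (N : ℕ) (x : E) : ℝ :=
  (N : ℝ)⁻¹ * ∑ k ∈ Finset.range N, dyadicBump (2 ^ k * r) x

theorem contDiff_dyadicCutoff (r : ℝ) (N : ℕ) : ContDiff ℝ 1 (dyadicCutoff r N : E → ℝ) :=
  contDiff_const.mul (.sum fun _ _ => contDiff_dyadicBump _)

theorem dyadicCutoff_eq_one (hr : 0 < r) (hN : N ≠ 0) (hx : ‖x‖ ≤ r) :
    dyadicCutoff r N x = 1 := by
  have hone (k : ℕ) : dyadicBump (2 ^ k * r) x = 1 :=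
    dyadicBump_eq_one (by positivity)
      (hx.trans (le_mul_of_one_le_left hr.le (one_le_pow₀ one_le_two)))
  simp [dyadicCutoff, hone, hN]

variable [CompleteSpace E]

theorem norm_mem_Ioo_of_gradient_dyadicBump_ne_zero (hR : 0 < R)
    (hx : gradient (dyadicBump R) x ≠ 0) : ‖x‖ ∈ Set.Ioo R (2 * R) := by
  unfold dyadicBump at hx
  rw [← norm_ne_zero_iff, norm_gradient, norm_ne_zero_iff, fderiv_comp_smul] at hx
  have h := dist_mem_Ioo_of_fderiv_contDiffBump_ne_zero _ (right_ne_zero_of_smul hx)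
  rwa [dist_zero_right, norm_smul, norm_inv, norm_of_nonneg hR.le, Set.mem_Ioo,
    lt_inv_mul_iff₀ hR, inv_mul_lt_iff₀ hR, mul_one, mul_comm R] at h

theorem inner_gradient_dyadicBump_eq_zero (hR : 0 < R) (hS : 0 < S) (hRS : 2 * R ≤ S) (x : E) :
    inner ℝ (gradient (dyadicBump R) x) (gradient (dyadicBump S) x) = 0 := by
  by_contra hne
  have hxR := norm_mem_Ioo_of_gradient_dyadicBump_ne_zero hR (x := x)
    fun h => hne (by rw [h, inner_zero_left])
  have hxS := norm_mem_Ioo_of_gradient_dyadicBump_ne_zero hS (x := x)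
    fun h => hne (by rw [h, inner_zero_right])
  exact (hxR.2.trans_le hRS).not_gt hxS.1

theorem gradient_dyadicCutoff (r : ℝ) (N : ℕ) (x : E) : gradient (dyadicCutoff r N) x =
    (N : ℝ)⁻¹ • ∑ k ∈ Finset.range N, gradient (dyadicBump (2 ^ k * r)) x := by
  simp only [gradient, ← map_sum, ← map_smul]
  congr 1
  exact ((HasFDerivAt.fun_sum fun k _ =>
    ((contDiff_dyadicBump _).differentiable one_ne_zero x).hasFDerivAt).const_mul _).fderiv

theorem norm_gradient_dyadicCutoff_sq (hr : 0 < r) (N : ℕ) (x : E) :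
    ‖gradient (dyadicCutoff r N) x‖ ^ 2 =
      (N ^ 2 : ℝ)⁻¹ * ∑ k ∈ Finset.range N, ‖gradient (dyadicBump (2 ^ k * r)) x‖ ^ 2 := by
  have horth {i j : ℕ} (hij : i < j) : inner ℝ (gradient (dyadicBump (2 ^ i * r)) x)
      (gradient (dyadicBump (2 ^ j * r)) x) = 0 := by
    refine inner_gradient_dyadicBump_eq_zero (by positivity) (by positivity) ?_ x
    rw [← mul_assoc, ← pow_succ']
    gcongr
    · exact one_le_two
    · exact hij
  rw [gradient_dyadicCutoff, norm_smul, mul_pow, norm_sum_sq_of_pairwise_inner_eq_zero]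
  · simp
  · intro i _ j _ hij
    rcases hij.lt_or_gt with h | h
    · exact horth h
    · rw [real_inner_comm, horth h]

end DyadicCutoff

section Parabolicity

variable {E : Type*} [NormedAddCommGroup E] [InnerProductSpace ℝ E] [FiniteDimensional ℝ E]
  {R r : ℝ} {N : ℕ}

theorem hasCompactSupport_dyadicBump (hR : R ≠ 0) :
    HasCompactSupport (dyadicBump R : E → ℝ) :=
  (ContDiffBump.hasCompactSupport _).comp_smul (inv_ne_zero hR)

theorem hasCompactSupport_dyadicCutoff (hr : r ≠ 0) :
    HasCompactSupport (dyadicCutoff r N : E → ℝ) := by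
  refine HasCompactSupport.mul_left ?_
  simp only [← Finset.sum_apply]
  exact Finset.sum_induction _ HasCompactSupport (fun _ _ => .add) .zero fun _ _ =>
    hasCompactSupport_dyadicBump (by positivity)

variable [MeasurableSpace E] [BorelSpace E]

theorem integral_norm_gradient_comp_smul_sq (hE : Module.finrank ℝ E = 2) (φ : E → ℝ) {c : ℝ}
    (hc : c ≠ 0) : ∫ x, ‖gradient (fun y => φ (c • y)) x‖ ^ 2 = ∫ x, ‖gradient φ x‖ ^ 2 := by
  simp only [gradient_comp_smul, norm_smul, mul_pow, norm_eq_abs, sq_abs]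
  rw [integral_const_mul, Measure.integral_comp_smul volume (fun x => ‖gradient φ x‖ ^ 2), hE,
    abs_of_pos (by positivity), smul_eq_mul, mul_inv_cancel_left₀ (by positivity)]

theorem integral_norm_gradient_dyadicBump_sq (hE : Module.finrank ℝ E = 2) (hR : R ≠ 0) :
    ∫ x : E, ‖gradient (dyadicBump R) x‖ ^ 2 = ∫ x : E, ‖gradient (dyadicBump 1) x‖ ^ 2 := by
  have hscale : dyadicBump R = fun x : E => dyadicBump 1 (R⁻¹ • x) := by
    simp only [dyadicBump, inv_one, one_smul, funext_iff, implies_true]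
  rw [hscale, integral_norm_gradient_comp_smul_sq hE _ (inv_ne_zero hR)]

theorem integral_norm_gradient_dyadicCutoff_sq (hE : Module.finrank ℝ E = 2) (hr : 0 < r)
    (hN : N ≠ 0) :
    ∫ x : E, ‖gradient (dyadicCutoff r N) x‖ ^ 2 =
      (∫ x : E, ‖gradient (dyadicBump 1) x‖ ^ 2) / N := by
  simp only [norm_gradient_dyadicCutoff_sq hr]
  rw [integral_const_mul, integral_finsetSum _ fun k _ =>
    integrable_norm_gradient_sq (contDiff_dyadicBump _)
      (hasCompactSupport_dyadicBump (by positivity)),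
    Finset.sum_congr rfl fun k _ =>
      integral_norm_gradient_dyadicBump_sq hE (R := 2 ^ k * r) (by positivity),
    Finset.sum_const, Finset.card_range, nsmul_eq_mul]
  field_simp

theorem exists_cutoff_integral_norm_gradient_sq_lt (hE : Module.finrank ℝ E = 2) (r : ℝ) {ε : ℝ}
    (hε : 0 < ε) :
    ∃ η : E → ℝ, ContDiff ℝ 1 η ∧ HasCompactSupport η ∧ (∀ x, ‖x‖ ≤ r → η x = 1) ∧
      ∫ x, ‖gradient η x‖ ^ 2 < ε := by
  obtain ⟨s, hs, hrs⟩ : ∃ s : ℝ, 0 < s ∧ r ≤ s := ⟨max 1 r, by positivity, le_max_right _ _⟩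
  obtain ⟨N, hN⟩ := exists_nat_gt ((∫ x : E, ‖gradient (dyadicBump 1) x‖ ^ 2) / ε)
  have hNpos : (0 : ℝ) < N :=
    hN.trans_le' (div_nonneg (integral_nonneg fun x => sq_nonneg _) hε.le)
  have hN0 : N ≠ 0 := by exact_mod_cast hNpos.ne'
  refine ⟨dyadicCutoff s N, contDiff_dyadicCutoff s N, hasCompactSupport_dyadicCutoff hs.ne',
    fun x hx => dyadicCutoff_eq_one hs hN0 (hx.trans hrs), ?_⟩
  rw [integral_norm_gradient_dyadicCutoff_sq hE hs hN0, div_lt_comm₀ hNpos hε]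
  exact hN

end Parabolicity

section Liouville

variable {E : Type*} [NormedAddCommGroup E] [InnerProductSpace ℝ E] [FiniteDimensional ℝ E]
  [MeasurableSpace E] [BorelSpace E] {B : E → E →L[ℝ] E →L[ℝ] ℝ} {w : E → ℝ} {Φ : ℝ → ℝ} {M C : ℝ}

theorem setIntegral_ball_energyDensity_eq_zero (hE : Module.finrank ℝ E = 2) (hB : Continuous B)
    (hsymm : ∀ x p q, B x p q = B x q p) (hnonneg : ∀ x q, 0 ≤ B x q q)
    (hsol : IsWeakSolution B w) (hw : ContDiff ℝ 1 w) (hΦ : ContDiff ℝ 1 Φ)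
    (hΦ' : ∀ t, 0 < deriv Φ t) (hΦM : ∀ t, |Φ t| ≤ M)
    (hbd : ∀ x q, B x q q ≤ C * deriv Φ (w x) * ‖q‖ ^ 2) (r : ℝ) :
    ∫ x in ball 0 r, energyDensity B Φ w x = 0 := by
  have hQ (x : E) : 0 ≤ energyDensity B Φ w x := mul_nonneg (hΦ' _).le (hnonneg _ _)
  refine le_antisymm (le_of_forall_pos_lt_add fun ε hε => ?_) (integral_nonneg hQ)
  have hA : 0 < 4 * M ^ 2 * |C| + 1 := by positivity
  obtain ⟨η, hη, hηc, hη1, hηε⟩ :=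
    exists_cutoff_integral_norm_gradient_sq_lt hE r (div_pos hε hA)
  have hint := integrable_sq_mul_energyDensity hB hΦ hw hη.continuous hηc
  calc ∫ x in ball 0 r, energyDensity B Φ w x
      = ∫ x in ball 0 r, η x ^ 2 * energyDensity B Φ w x :=
        setIntegral_congr_fun measurableSet_ball fun x hx => by
          simp [hη1 x (mem_ball_zero_iff.1 hx).le]
    _ ≤ ∫ x, η x ^ 2 * energyDensity B Φ w x :=
        setIntegral_le_integral hint (.of_forall fun x => mul_nonneg (sq_nonneg _) (hQ x))
    _ ≤ 4 * M ^ 2 * C * ∫ x, ‖gradient η x‖ ^ 2 :=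
        integral_sq_mul_energyDensity_le hB hsymm hnonneg hsol hw hΦ hΦ' hΦM hbd hη hηc
    _ ≤ (4 * M ^ 2 * |C| + 1) * ∫ x, ‖gradient η x‖ ^ 2 := by
        refine mul_le_mul_of_nonneg_right ?_ (integral_nonneg fun x => sq_nonneg _)
        have := mul_le_mul_of_nonneg_left (le_abs_self C) (by positivity : 0 ≤ 4 * M ^ 2)
        linarith
    _ < 0 + ε := by rwa [zero_add, ← lt_div_iff₀' hA]

theorem gradient_eq_zero_of_isWeakSolution (hE : Module.finrank ℝ E = 2) (hB : Continuous B)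
    (hsymm : ∀ x p q, B x p q = B x q p) (hpos : ∀ x q, q ≠ 0 → 0 < B x q q)
    (hsol : IsWeakSolution B w) (hw : ContDiff ℝ 1 w) (hΦ : ContDiff ℝ 1 Φ)
    (hΦ' : ∀ t, 0 < deriv Φ t) (hΦM : ∀ t, |Φ t| ≤ M)
    (hbd : ∀ x q, B x q q ≤ C * deriv Φ (w x) * ‖q‖ ^ 2) (x : E) : gradient w x = 0 := by
  have hnonneg (x q : E) : 0 ≤ B x q q := by
    rcases eq_or_ne q 0 with rfl | hq
    · simp
    · exact (hpos x q hq).le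
  have hQ := continuous_energyDensity hB hΦ hw
  have hQ0 : 0 ≤ energyDensity B Φ w := fun x => mul_nonneg (hΦ' _).le (hnonneg _ _)
  by_contra hx
  have hQx : energyDensity B Φ w x ≠ 0 := (mul_pos (hΦ' _) (hpos x _ hx)).ne'
  have hint : IntegrableOn (energyDensity B Φ w) (ball 0 (‖x‖ + 1)) :=
    (hQ.continuousOn.integrableOn_compact (isCompact_closedBall _ _)).mono_set
      ball_subset_closedBall
  refine ((setIntegral_pos_iff_support_of_nonneg_ae (.of_forall hQ0) hint).2 ?_).ne'
    (setIntegral_ball_energyDensity_eq_zero hE hB hsymm hnonneg hsol hw hΦ hΦ' hΦM hbd _)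
  exact (hQ.isOpen_support.inter isOpen_ball).measure_pos _ ⟨x, hQx, by simp⟩

end Liouville

section LinearizedCoefficient

variable {E : Type*} [NormedAddCommGroup E] [InnerProductSpace ℝ E] [CompleteSpace E] {f u : E → ℝ}

/-- The coefficient `D²f(∇u)` of the equation `div (D²f(∇u) ∇w) = 0` satisfied by the directional
derivatives `w` of a solution `u` of `div [Df(∇u)] = 0`. -/
def linearizedCoeff (f u : E → ℝ) (x : E) : E →L[ℝ] E →L[ℝ] ℝ :=
  fderiv ℝ (fderiv ℝ f) (gradient u x)

theorem continuous_linearizedCoeff (hf : ContDiff ℝ 2 f) (hu : ContDiff ℝ 1 u) :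
    Continuous (linearizedCoeff f u) :=
  ((hf.fderiv_right (m := 1) (by norm_num)).continuous_fderiv one_ne_zero).comp
    (continuous_gradient hu)

theorem linearizedCoeff_comm (hf : ContDiff ℝ 2 f) (x p q : E) :
    linearizedCoeff f u x p q = linearizedCoeff f u x q p :=
  hf.contDiffAt.isSymmSndFDerivAt (by simp) p q

theorem linearizedCoeff_apply_self_eq (x q : E) :
    linearizedCoeff f u x q q = iteratedFDeriv ℝ 2 f (gradient u x) ![q, q] := by
  simp [linearizedCoeff, iteratedFDeriv_two_apply]

theorem linearizedCoeff_apply_self_le (x q : E) :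
    linearizedCoeff f u x q q ≤ ‖iteratedFDeriv ℝ 2 f (gradient u x)‖ * ‖q‖ ^ 2 := by
  rw [linearizedCoeff_apply_self_eq]
  refine (le_norm_self _).trans ((ContinuousMultilinearMap.le_opNorm _ _).trans_eq ?_)
  simp [Fin.prod_univ_two, sq]

theorem contDiff_fderiv_comp_gradient (hf : ContDiff ℝ 2 f) (hu : ContDiff ℝ 2 u) :
    ContDiff ℝ 1 fun y => fderiv ℝ f (gradient u y) :=
  (hf.fderiv_right (by norm_num)).comp (contDiff_gradient hu (by norm_num))

theorem fderiv_fderiv_comp_gradient (hf : ContDiff ℝ 2 f) (hu : ContDiff ℝ 2 u) (x e : E) :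
    fderiv ℝ (fun y => fderiv ℝ f (gradient u y)) x e =
      linearizedCoeff f u x (fderiv ℝ (gradient u) x e) := by
  have hDf := (hf.fderiv_right (m := 1) (by norm_num)).differentiable one_ne_zero (gradient u x)
  have hDu := (contDiff_gradient (m := 1) hu (by norm_num)).differentiable one_ne_zero x
  exact congr($((hDf.hasFDerivAt.comp x hDu.hasFDerivAt).fderiv) e)

theorem fderiv_fderiv_gradient_apply (hf : ContDiff ℝ 2 f) (hu : ContDiff ℝ 2 u) (x p q : E) :
    fderiv ℝ (fun y => fderiv ℝ f (gradient u y) q) x p =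
      linearizedCoeff f u x (fderiv ℝ (gradient u) x p) q := by
  have hF := contDiff_fderiv_comp_gradient hf hu
  rw [← fderiv_fderiv_comp_gradient hf hu,
    fderiv_clm_apply (hF.differentiable one_ne_zero x) (by fun_prop)]
  simp

end LinearizedCoefficient

section Linearization

variable {E ι : Type*} [NormedAddCommGroup E] [InnerProductSpace ℝ E] [Fintype ι]
  [FiniteDimensional ℝ E] [MeasurableSpace E] [BorelSpace E] (b : OrthonormalBasis ι ℝ E)

theorem integral_fderiv_apply_gradient_eq_zero {F : E → StrongDual ℝ E} (hF : ContDiff ℝ 1 F)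
    (hdiv : ∀ x, ∑ i, fderiv ℝ (fun y => F y (b i)) x (b i) = 0) {φ : E → ℝ}
    (hφ : ContDiff ℝ 1 φ) (hφc : HasCompactSupport φ) (e : E) :
    ∫ x, fderiv ℝ F x e (gradient φ x) = 0 := by
  have hFi (i : ι) : ContDiff ℝ 1 fun y => F y (b i) := hF.clm_apply contDiff_const
  have happly (i : ι) (x : E) : fderiv ℝ F x e (b i) = fderiv ℝ (fun y => F y (b i)) x e := by
    rw [fderiv_clm_apply (hF.differentiable one_ne_zero x) (by fun_prop)]
    simp
  have hint (i : ι) (p q : E) :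
      Integrable fun x => fderiv ℝ (fun y => F y (b i)) x p * fderiv ℝ φ x q :=
    ((((hFi i).continuous_fderiv one_ne_zero).clm_apply continuous_const).mul
      ((hφ.continuous_fderiv one_ne_zero).clm_apply
        continuous_const)).integrable_of_hasCompactSupport
      (hφc.fderiv_apply ℝ q).mul_left
  calc ∫ x, fderiv ℝ F x e (gradient φ x)
      = ∑ i, ∫ x, fderiv ℝ (fun y => F y (b i)) x e * fderiv ℝ φ x (b i) := by
        rw [← integral_finsetSum _ fun i _ => hint i e (b i)]
        simp only [apply_gradient_eq_sum b, happly]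
    _ = ∑ i, ∫ x, fderiv ℝ (fun y => F y (b i)) x (b i) * fderiv ℝ φ x e :=
        Finset.sum_congr rfl fun i _ => integral_fderiv_mul_fderiv_comm (hFi i) hφ hφc e (b i)
    _ = 0 := by
        rw [← integral_finsetSum _ fun i _ => hint i (b i) e]
        simp only [← Finset.sum_mul, hdiv, zero_mul, integral_zero]

theorem isWeakSolution_fderiv_apply {f u : E → ℝ} (hf : ContDiff ℝ 2 f) (hu : ContDiff ℝ 2 u)
    (hdiv : ∀ x, ∑ i, fderiv ℝ (fun y => fderiv ℝ f (gradient u y) (b i)) x (b i) = 0) (e : E) :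
    IsWeakSolution (linearizedCoeff f u) fun x => fderiv ℝ u x e := by
  intro φ hφ hφc
  simp only [gradient_fderiv_apply hu, ← fderiv_fderiv_comp_gradient hf hu]
  exact integral_fderiv_apply_gradient_eq_zero b (contDiff_fderiv_comp_gradient hf hu) hdiv hφ hφc e

end Linearization

section Plane

variable {E : Type*} [NormedAddCommGroup E] [InnerProductSpace ℝ E]
  {b : OrthonormalBasis (Fin 2) ℝ E}

theorem eq_zero_of_isSymmetric_of_sum_apply_eq_zero {A : E →L[ℝ] E} {B : E →L[ℝ] E →L[ℝ] ℝ}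
    (hA : (A : E →ₗ[ℝ] E).IsSymmetric) (hA0 : A (b 0) = 0) (hB : ∀ q, q ≠ 0 → 0 < B q q)
    (hsum : ∑ i, B (A (b i)) (b i) = 0) : A = 0 := by
  have horth : inner ℝ (b 0) (A (b 1)) = 0 := by
    have h := hA (b 0) (b 1)
    rwa [ContinuousLinearMap.coe_coe, hA0, inner_zero_left, eq_comm] at h
  have hA1 : A (b 1) = inner ℝ (b 1) (A (b 1)) • b 1 := by
    simpa [Fin.sum_univ_two, horth] using (b.sum_repr' (A (b 1))).symm
  have hcoef : inner ℝ (b 1) (A (b 1)) = 0 := by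
    rw [Fin.sum_univ_two, hA0, hA1] at hsum
    simpa [(hB _ (b.orthonormal.ne_zero 1)).ne'] using hsum
  refine ContinuousLinearMap.coe_injective (b.toBasis.ext fun i => ?_)
  fin_cases i
  · simpa using hA0
  · simpa [hcoef] using hA1

theorem fderiv_gradient_eq_zero_of_norm_iteratedFDeriv_le [FiniteDimensional ℝ E]
    [MeasurableSpace E] [BorelSpace E] {f u : E → ℝ} {Φ : ℝ → ℝ} {M C : ℝ} (hf : ContDiff ℝ 2 f)
    (hpos : ∀ p q, q ≠ 0 → 0 < iteratedFDeriv ℝ 2 f p ![q, q]) (hu : ContDiff ℝ 2 u)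
    (hdiv : ∀ x, ∑ i, fderiv ℝ (fun y => fderiv ℝ f (gradient u y) (b i)) x (b i) = 0)
    (hΦ : ContDiff ℝ 1 Φ) (hΦ' : ∀ t, 0 < deriv Φ t) (hΦM : ∀ t, |Φ t| ≤ M)
    (hbd : ∀ x, ‖iteratedFDeriv ℝ 2 f (gradient u x)‖ ≤ C * deriv Φ (fderiv ℝ u x (b 0))) (x : E) :
    fderiv ℝ (gradient u) x = 0 := by
  have hE : Module.finrank ℝ E = 2 := by
    rw [Module.finrank_eq_card_basis b.toBasis, Fintype.card_fin]
  have hBpos (x q : E) (hq : q ≠ 0) : 0 < linearizedCoeff f u x q q := by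
    rw [linearizedCoeff_apply_self_eq]
    exact hpos _ q hq
  have hw : ContDiff ℝ 1 fun x => fderiv ℝ u x (b 0) :=
    (hu.fderiv_right (by norm_num)).clm_apply contDiff_const
  have hgrad := gradient_eq_zero_of_isWeakSolution hE
    (continuous_linearizedCoeff hf (hu.of_le one_le_two)) (linearizedCoeff_comm hf) hBpos
    (isWeakSolution_fderiv_apply b hf hu hdiv (b 0)) hw hΦ hΦ' hΦM
    (fun x q => (linearizedCoeff_apply_self_le x q).trans
      (mul_le_mul_of_nonneg_right (hbd x) (sq_nonneg _))) x
  refine eq_zero_of_isSymmetric_of_sum_apply_eq_zero (b := b) (isSymmetric_fderiv_gradient hu x)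
    ?_ (hBpos x) ?_
  · rw [← gradient_fderiv_apply hu, hgrad]
  · simpa only [fderiv_fderiv_gradient_apply hf hu] using hdiv x

end Plane

section Saturation

/-- A bounded increasing function whose derivative decays only like `1 / (|t| log² |t|)`, the
slowest rate that the growth condition on `∂₁u` can afford. -/
def saturation (t : ℝ) : ℝ := arctan (arsinh t)

theorem contDiff_saturation : ContDiff ℝ 1 saturation := contDiff_arsinh.arctan

theorem deriv_saturation (t : ℝ) :
    deriv saturation t = ((1 + arsinh t ^ 2) * √(1 + t ^ 2))⁻¹ := by
  have h : HasDerivAt saturation _ t := (hasDerivAt_arsinh t).arctan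
  rw [h.deriv, one_div, mul_inv]

theorem deriv_saturation_pos (t : ℝ) : 0 < deriv saturation t := by
  rw [deriv_saturation]
  positivity

theorem abs_saturation_le (t : ℝ) : |saturation t| ≤ π / 2 :=
  abs_le.2 ⟨(neg_pi_div_two_lt_arctan _).le, (arctan_lt_pi_div_two _).le⟩

theorem sqrt_one_add_sq_le (t : ℝ) : √(1 + t ^ 2) ≤ 1 + |t| := by
  simpa only [norm_eq_abs, sq_abs] using sqrt_one_add_norm_sq_le t

theorem abs_arsinh_le (t : ℝ) : |arsinh t| ≤ 2 * log (1 + |t|) := by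
  wlog ht : 0 ≤ t generalizing t
  · simpa only [arsinh_neg, abs_neg] using this (-t) (by linarith)
  have hsqrt : √(1 + t ^ 2) ≤ 1 + t := by simpa only [abs_of_nonneg ht] using sqrt_one_add_sq_le t
  rw [abs_of_nonneg (arsinh_nonneg_iff.2 ht), abs_of_nonneg ht, arsinh]
  calc log (t + √(1 + t ^ 2)) ≤ log ((1 + t) ^ 2) := log_le_log (by positivity) (by nlinarith)
    _ = 2 * log (1 + t) := by rw [log_pow, Nat.cast_ofNat]

theorem le_two_add_mul_log_sq {s : ℝ} (hs : 0 ≤ s) : s ≤ 2 + s * log (1 + s) ^ 2 := by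
  rcases le_total s 2 with h2 | h2
  · nlinarith [mul_nonneg hs (sq_nonneg (log (1 + s)))]
  · have hlog : 1 ≤ log (1 + s) :=
      (le_log_iff_exp_le (by positivity)).2 (by linarith [exp_one_lt_three])
    nlinarith [le_mul_of_one_le_right hs (one_le_pow₀ hlog (n := 2))]

theorem log_sq_le_one_add_mul_log_sq {s : ℝ} (hs : 0 ≤ s) :
    log (1 + s) ^ 2 ≤ 1 + s * log (1 + s) ^ 2 := by
  rcases le_total s 1 with h1 | h1
  · have hlog : log (1 + s) ≤ 1 := by linarith [log_le_sub_one_of_pos (by positivity : 0 < 1 + s)]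
    nlinarith [mul_nonneg hs (sq_nonneg (log (1 + s))),
      pow_le_one₀ (log_nonneg (by linarith : 1 ≤ 1 + s)) hlog (n := 2)]
  · nlinarith [le_mul_of_one_le_left (sq_nonneg (log (1 + s))) h1]

theorem inv_deriv_saturation_le (t : ℝ) :
    (deriv saturation t)⁻¹ ≤ 9 * (1 + |t| * log (1 + |t|) ^ 2) := by
  set l := log (1 + |t|)
  have harsinh : arsinh t ^ 2 ≤ 4 * l ^ 2 := by
    rw [← sq_abs]
    exact (pow_le_pow_left₀ (abs_nonneg _) (abs_arsinh_le t) 2).trans_eq (by ring)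
  rw [deriv_saturation, inv_inv]
  calc (1 + arsinh t ^ 2) * √(1 + t ^ 2) ≤ (1 + 4 * l ^ 2) * (1 + |t|) := by
        gcongr
        exact sqrt_one_add_sq_le t
    _ = 1 + |t| + 4 * l ^ 2 + 4 * (|t| * l ^ 2) := by ring
    _ ≤ 9 * (1 + |t| * l ^ 2) := by
        linarith [le_two_add_mul_log_sq (abs_nonneg t),
          log_sq_le_one_add_mul_log_sq (abs_nonneg t)]

theorem one_div_one_add_le_mul_deriv_saturation {K n t : ℝ} (hn : 0 ≤ n)
    (ht : |t| * log (1 + |t|) ^ 2 ≤ K * (n + 1)) :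
    1 / (1 + n) ≤ 9 * (1 + K) * deriv saturation t := by
  have h : (deriv saturation t)⁻¹ ≤ 9 * (1 + K) * (1 + n) := by
    linarith [inv_deriv_saturation_le t]
  rw [inv_le_iff_one_le_mul₀ (deriv_saturation_pos t)] at h
  rw [div_le_iff₀ (by positivity)]
  linarith

end Saturation

theorem abs_pd_le_norm_gradient (u : E2 → ℝ) (i : Fin 2) (x : E2) :
    |pd u i x| ≤ ‖gradient u x‖ := by
  simpa [norm_gradient, ee, pd] using (fderiv ℝ u x).le_opNorm (ee i)

theorem statement8 (f u : E2 → ℝ)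
    (hf : ContDiff ℝ 2 f)
    (hpos : ∀ p q : E2, q ≠ 0 → 0 < Hess f p q)
    (Lam : ℝ) (hLam : 0 < Lam)
    (hgrow : ∀ p : E2, ‖iteratedFDeriv ℝ 2 f p‖ ≤ Lam / (1 + ‖p‖))
    (hu : ContDiff ℝ 2 u) (heq : solves f u)
    (K : ℝ) (hK : 0 < K)
    (hbd : ∀ x : E2, |pd u 0 x| * (Real.log (1 + |pd u 0 x|)) ^ 2 ≤ K * (|pd u 1 x| + 1)) :
    ∃ a b c : ℝ, ∀ x : E2, u x = a * x 0 + b * x 1 + c := by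
  let e := EuclideanSpace.basisFun (Fin 2) ℝ
  have he : ⇑e = ee := funext (EuclideanSpace.basisFun_apply (Fin 2) ℝ)
  have hcoeff (x : E2) : ‖iteratedFDeriv ℝ 2 f (gradient u x)‖ ≤
      Lam * (9 * (1 + K)) * deriv saturation (fderiv ℝ u x (e 0)) := by
    have hgrad : |pd u 0 x| * log (1 + |pd u 0 x|) ^ 2 ≤ K * (‖gradient u x‖ + 1) :=
      (hbd x).trans (by gcongr; exact abs_pd_le_norm_gradient u 1 x)
    calc _ ≤ Lam * (1 / (1 + ‖gradient u x‖)) := by simpa only [mul_one_div] using hgrow _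
      _ ≤ Lam * (9 * (1 + K) * deriv saturation (pd u 0 x)) := by
        gcongr
        exact one_div_one_add_le_mul_deriv_saturation (norm_nonneg _) hgrad
      _ = _ := by rw [← mul_assoc, he, pd]
  have hD2u (x : E2) : fderiv ℝ (gradient u) x = 0 :=
    fderiv_gradient_eq_zero_of_norm_iteratedFDeriv_le (b := e) hf hpos hu
      (by simpa only [he, solves] using heq) contDiff_saturation deriv_saturation_pos
      abs_saturation_le hcoeff x
  refine ⟨gradient u 0 0, gradient u 0 1, u 0, fun x => ?_⟩
  rw [eq_inner_gradient_add_of_fderiv_gradient_eq_zero hu hD2u x, PiLp.inner_apply,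
    Fin.sum_univ_two]
  simp [mul_comm]
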